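/- arXiv:2201.05181 — 5 statements merged into one kernel-verified Lean document; each statement's English description precedes it below -/
import Mathlib

section
/- Let $G$ be a simple graph on $n$ vertices with maximum degree at most $\Delta$. For any integer $t \ge 3$, if $n = a(\Delta+1)+b$ where $a, b$ are integers with $a \ge 0$ and $0 \le b \le \Delta$, then the number of $t$-cliques of $G$ satisfies $k_t(G) \le a\binom{\Delta+1}{t}+\binom{b}{t}$. -/
/-- Discrete convexity of binomial coefficients. -/
theorem gls_convex (t q i j : ℕ) :
    (q + i).choose t + (q + j).choose t ≤ q.choose t + (q + i + j).choose t := by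
  cases t with
  | zero => simp
  | succ t =>
    induction i with
    | zero => simp
    | succ i ih =>
      have h1 : (q + (i + 1)).choose (t + 1) = (q + i).choose t + (q + i).choose (t + 1) :=
        Nat.choose_succ_succ _ _
      have h2 : (q + (i + 1) + j).choose (t + 1)
          = (q + i + j).choose t + (q + i + j).choose (t + 1) := by
        rw [show q + (i + 1) + j = (q + i + j) + 1 by ring]
        exact Nat.choose_succ_succ _ _
      have h3 : (q + i).choose t ≤ (q + i + j).choose t := Nat.choose_le_choose t (by omega)
      omega

open Classical in
/-- The local inequality on a set of `t+1` vertices. -/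
theorem gls_local {V : Type*} (G : SimpleGraph V) (t : ℕ) (ht : 3 ≤ t) (S : Finset V)
    (hS : S.card = t + 1) :
    (S.filter (fun z => G.IsClique (S.erase z : Finset V) ∧ (∃ x ∈ S, G.Adj z x) ∧
      ∃ x ∈ S, x ≠ z ∧ ¬ G.Adj z x)).card ≤
    (S.filter (fun y => (∀ x ∈ S, x ≠ y → G.Adj y x) ∧
      ¬ G.IsClique (S.erase y : Finset V))).card := by
  set A := S.filter (fun z => G.IsClique (S.erase z : Finset V) ∧ (∃ x ∈ S, G.Adj z x) ∧
      ∃ x ∈ S, x ≠ z ∧ ¬ G.Adj z x) with hA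
  set B := S.filter (fun y => (∀ x ∈ S, x ≠ y → G.Adj y x) ∧
      ¬ G.IsClique (S.erase y : Finset V)) with hB
  rcases A.eq_empty_or_nonempty with h0 | ⟨z, hz⟩
  · simp [h0]
  have hz' := hz
  rw [hA, Finset.mem_filter] at hz'
  obtain ⟨hzS, hcl, ⟨y, hyS, hzy⟩, w, hwS, hwz, hzw⟩ := hz'
  have key : ∀ u ∈ S, G.Adj z u → u ∈ B := by
    intro u huS hzu
    rw [hB, Finset.mem_filter]
    refine ⟨huS, ?_, ?_⟩
    · intro x hx hxu
      by_cases hxz : x = z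
      · subst hxz; exact hzu.symm
      · exact hcl (by simp [huS, hzu.ne']) (by simp [hx, hxz]) (Ne.symm hxu)
    · intro hc
      have hwu : w ≠ u := by rintro rfl; exact hzw hzu
      exact hzw (hc (by simp [hzS, hzu.ne]) (by simp [hwS, hwu]) (Ne.symm hwz))
  have hsub : ∀ u ∈ S, u ≠ z → ¬ G.Adj z u → A ⊆ {z, u} := by
    intro u huS huz hzu x hx
    rw [hA, Finset.mem_filter] at hx
    by_contra hne
    simp only [Finset.mem_insert, Finset.mem_singleton, not_or] at hne
    exact hzu (hx.2.1 (by simp [hzS, Ne.symm hne.1]) (by simp [huS, Ne.symm hne.2]) (Ne.symm huz))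
  by_cases hone : A.card ≤ 1
  · exact hone.trans (Finset.card_pos.2 ⟨y, key y hyS hzy⟩)
  have hA2 : A.card ≤ 2 := (Finset.card_le_card (hsub w hwS hwz hzw)).trans Finset.card_le_two
  have hB2 : (S \ {z, w}) ⊆ B := by
    intro u hu
    simp only [Finset.mem_sdiff, Finset.mem_insert, Finset.mem_singleton, not_or] at hu
    apply key u hu.1
    by_contra hzu
    have h1 := hsub u hu.1 hu.2.1 hzu
    have h2 := hsub w hwS hwz hzw
    have : A ⊆ {z} := by
      intro x hx
      have a1 := h1 hx
      have a2 := h2 hx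
      simp only [Finset.mem_insert, Finset.mem_singleton] at a1 a2 ⊢
      rcases a1 with a1 | a1
      · exact a1
      · rcases a2 with a2 | a2
        · exact a2
        · exact absurd (a1.symm.trans a2) hu.2.2
    exact hone (by simpa using Finset.card_le_card this)
  have h3 := Finset.card_le_card hB2
  have h4 := Finset.le_card_sdiff {z, w} S
  have h5 : ({z, w} : Finset V).card ≤ 2 := Finset.card_le_two
  omega

open Classical in
/-- The summed inequality for mixed pairs. -/
theorem gls_sum_mixed {V : Type*} (G : SimpleGraph V) (t : ℕ) (ht : 3 ≤ t) (W : Finset V) :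
    ∑ v ∈ W, ((W.powersetCard t).filter (fun T : Finset V => G.IsClique (T : Set V) ∧
      (∃ x ∈ T, x = v ∨ G.Adj v x) ∧ ∃ x ∈ T, x ≠ v ∧ ¬ G.Adj v x)).card ≤
    ∑ v ∈ W, (((W.filter (G.Adj v)).powersetCard t).filter
      (fun T : Finset V => ¬ G.IsClique (T : Set V))).card := by
  rw [← Finset.card_sigma, ← Finset.card_sigma]
  set PA := W.sigma (fun v => (W.powersetCard t).filter (fun T : Finset V => G.IsClique (T : Set V) ∧
      (∃ x ∈ T, x = v ∨ G.Adj v x) ∧ ∃ x ∈ T, x ≠ v ∧ ¬ G.Adj v x)) with hPA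
  set PB := W.sigma (fun v => ((W.filter (G.Adj v)).powersetCard t).filter
      (fun T : Finset V => ¬ G.IsClique (T : Set V))) with hPB
  have hAnot : ∀ p ∈ PA, p.1 ∉ p.2 := by
    rintro ⟨v, T⟩ hp hv
    simp only [hPA, Finset.mem_sigma, Finset.mem_filter] at hp
    obtain ⟨_, _, hc, _, x, hx, hxv, hn⟩ := hp
    exact hn (hc hv hx (Ne.symm hxv))
  have hBnot : ∀ p ∈ PB, p.1 ∉ p.2 := by
    rintro ⟨v, T⟩ hp hv
    simp only [hPB, Finset.mem_sigma, Finset.mem_filter, Finset.mem_powersetCard] at hp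
    have := hp.2.1.1 hv
    simp at this
  have mA : ∀ p ∈ PA, insert p.1 p.2 ∈ W.powersetCard (t + 1) := by
    rintro ⟨v, T⟩ hp
    have h := hAnot _ hp
    simp only [hPA, Finset.mem_sigma, Finset.mem_filter, Finset.mem_powersetCard] at hp
    rw [Finset.mem_powersetCard, Finset.card_insert_of_notMem h, hp.2.1.2]
    exact ⟨Finset.insert_subset hp.1 hp.2.1.1, rfl⟩
  have mB : ∀ p ∈ PB, insert p.1 p.2 ∈ W.powersetCard (t + 1) := by
    rintro ⟨v, T⟩ hp
    have h := hBnot _ hp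
    simp only [hPB, Finset.mem_sigma, Finset.mem_filter, Finset.mem_powersetCard] at hp
    rw [Finset.mem_powersetCard, Finset.card_insert_of_notMem h, hp.2.1.2]
    exact ⟨Finset.insert_subset hp.1 (hp.2.1.1.trans (Finset.filter_subset _ _)), rfl⟩
  rw [Finset.card_eq_sum_card_fiberwise mA, Finset.card_eq_sum_card_fiberwise mB]
  apply Finset.sum_le_sum
  intro S hS
  rw [Finset.mem_powersetCard] at hS
  refine le_trans ?_ ((gls_local G t ht S hS.2).trans ?_)
  · apply Finset.card_le_card_of_injOn (fun p => p.1)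
    · rintro ⟨v, T⟩ hp
      rw [Finset.mem_coe, Finset.mem_filter] at hp
      obtain ⟨hp, rfl⟩ := hp
      have h := hAnot _ hp
      simp only [hPA, Finset.mem_sigma, Finset.mem_filter, Finset.mem_powersetCard] at hp
      obtain ⟨_, _, hc, ⟨y, hy, hyv⟩, x, hx, hxv, hn⟩ := hp
      simp only at h
      simp only [Finset.coe_filter, Set.mem_ofPred_eq]
      rw [Finset.erase_insert h]
      refine ⟨Finset.mem_insert_self _ _, hc, ⟨y, Finset.mem_insert_of_mem hy, ?_⟩,
        x, Finset.mem_insert_of_mem hx, hxv, hn⟩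
      rcases hyv with rfl | hyv
      · exact absurd hy h
      · exact hyv
    · rintro ⟨v, T⟩ hp ⟨v', T'⟩ hp' hv
      rw [Finset.mem_coe, Finset.mem_filter] at hp hp'
      simp only at hv
      subst hv
      have h := hAnot _ hp.1
      have h' := hAnot _ hp'.1
      have e := hp.2.trans hp'.2.symm
      simp only at h h' e
      have : T = T' := by
        rw [← Finset.erase_insert h, ← Finset.erase_insert h', e]
      rw [this]
  · apply Finset.card_le_card_of_injOn (fun y => (⟨y, S.erase y⟩ : (_ : V) × Finset V))
    · intro y hy
      rw [Finset.mem_coe, Finset.mem_filter] at hy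
      obtain ⟨hyS, hadj, hnc⟩ := hy
      rw [Finset.mem_coe, Finset.mem_filter]
      refine ⟨?_, Finset.insert_erase hyS⟩
      simp only [hPB, Finset.mem_sigma, Finset.mem_filter, Finset.mem_powersetCard]
      refine ⟨hS.1 hyS, ⟨?_, ?_⟩, hnc⟩
      · intro x hx
        rw [Finset.mem_erase] at hx
        rw [Finset.mem_filter]
        exact ⟨hS.1 hx.2, hadj x hx.2 hx.1⟩
      · rw [Finset.card_erase_of_mem hyS, hS.2]; rfl
    · intro y _ y' _ h
      exact congrArg Sigma.fst h

open Classical in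
/-- Summed over all vertices, the number of cliques meeting a closed neighborhood. -/
theorem gls_sum {V : Type*} (G : SimpleGraph V) (t : ℕ) (ht : 3 ≤ t) (W : Finset V) :
    ∑ v ∈ W, ((W.powersetCard t).filter (fun T : Finset V => G.IsClique (T : Set V) ∧
      (∃ x ∈ T, x = v ∨ G.Adj v x))).card ≤
    ∑ v ∈ W, ((W.filter (G.Adj v)).card + 1).choose t := by
  set C : V → ℕ := fun v => ((insert v (W.filter (G.Adj v))).powersetCard t |>.filter
    (fun T : Finset V => G.IsClique (T : Set V))).card with hC
  refine le_trans (Finset.sum_le_sum (g := fun v => C v + ((W.powersetCard t).filter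
      (fun T : Finset V => G.IsClique (T : Set V) ∧
      (∃ x ∈ T, x = v ∨ G.Adj v x) ∧ ∃ x ∈ T, x ≠ v ∧ ¬ G.Adj v x)).card) ?_) ?_
  · intro v hv
    refine le_trans (Finset.card_le_card ?_) (Finset.card_union_le _ _)
    intro T hT
    rw [Finset.mem_filter, Finset.mem_powersetCard] at hT
    obtain ⟨⟨hTW, hTc⟩, hcl, hm⟩ := hT
    rw [Finset.mem_union, Finset.mem_filter, Finset.mem_filter, Finset.mem_powersetCard,
      Finset.mem_powersetCard]
    by_cases h : ∃ x ∈ T, x ≠ v ∧ ¬ G.Adj v x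
    · exact Or.inr ⟨⟨hTW, hTc⟩, hcl, hm, h⟩
    · push Not at h
      refine Or.inl ⟨⟨?_, hTc⟩, hcl⟩
      intro x hx
      rw [Finset.mem_insert, Finset.mem_filter]
      by_cases hxv : x = v
      · exact Or.inl hxv
      · exact Or.inr ⟨hTW hx, h x hx hxv⟩
  · refine le_trans ?_ (Finset.sum_le_sum (f := fun v => C v +
      (((W.filter (G.Adj v)).powersetCard t).filter
      (fun T : Finset V => ¬ G.IsClique (T : Set V))).card) ?_)
    · rw [Finset.sum_add_distrib, Finset.sum_add_distrib]
      exact Nat.add_le_add_left (gls_sum_mixed G t ht W) _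
    · intro v hv
      have hv' : v ∉ W.filter (G.Adj v) := by simp
      rw [← Finset.card_insert_of_notMem hv', ← Finset.card_powersetCard,
        ← Finset.card_filter_add_card_filter_not
        (s := (insert v (W.filter (G.Adj v))).powersetCard t) (fun T : Finset V => G.IsClique (T : Set V))]
      refine Nat.add_le_add_left (Finset.card_le_card ?_) _
      apply Finset.filter_subset_filter
      exact Finset.powersetCard_mono (Finset.subset_insert v (W.filter (G.Adj v)))

open Classical in
theorem gls_main {V : Type*} (G : SimpleGraph V) (Δ : ℕ) (t : ℕ) (ht : 3 ≤ t) (W : Finset V) :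
    ∀ a b : ℕ, (∀ v ∈ W, (W.filter (G.Adj v)).card ≤ Δ) → b ≤ Δ → W.card = a * (Δ + 1) + b →
    ((W.powersetCard t).filter (fun T : Finset V => G.IsClique (T : Set V))).card
      ≤ a * (Δ + 1).choose t + b.choose t := by
  induction W using Finset.strongInduction with
  | H W ih =>
  intro a b hΔ hb hn
  rcases W.eq_empty_or_nonempty with rfl | hne
  · have : Finset.powersetCard t (∅ : Finset V) = ∅ := by
      rw [Finset.powersetCard_eq_empty]; simp; omega
    simp [this]
  obtain ⟨v, hv, hle⟩ := Finset.exists_le_of_sum_le hne (gls_sum G t ht W)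
  set N := insert v (W.filter (G.Adj v)) with hN
  have hNW : N ⊆ W := Finset.insert_subset hv (Finset.filter_subset _ _)
  have hNc : N.card = (W.filter (G.Adj v)).card + 1 := Finset.card_insert_of_notMem (by simp)
  have hs := hΔ v hv
  rw [← hNc] at hle
  have hsub : W \ N ⊂ W := Finset.sdiff_ssubset hNW ⟨v, by simp [hN]⟩
  have hΔ' : ∀ u ∈ W \ N, ((W \ N).filter (G.Adj u)).card ≤ Δ := fun u hu =>
    (Finset.card_le_card (Finset.filter_subset_filter _ hsub.1)).trans (hΔ u (hsub.1 hu))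
  have hcard : (W \ N).card + N.card = W.card := Finset.card_sdiff_add_card_eq_card hNW
  have hsplit : ((W.powersetCard t).filter (fun T : Finset V => G.IsClique (T : Set V))).card ≤
      N.card.choose t +
      (((W \ N).powersetCard t).filter (fun T : Finset V => G.IsClique (T : Set V))).card := by
    refine le_trans ?_ (Nat.add_le_add_right hle _)
    refine le_trans (Finset.card_le_card ?_) (Finset.card_union_le _ _)
    intro T hT
    rw [Finset.mem_filter, Finset.mem_powersetCard] at hT
    obtain ⟨⟨hTW, hTc⟩, hcl⟩ := hT
    rw [Finset.mem_union, Finset.mem_filter, Finset.mem_filter, Finset.mem_powersetCard,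
      Finset.mem_powersetCard]
    by_cases h : ∃ x ∈ T, x = v ∨ G.Adj v x
    · exact Or.inl ⟨⟨hTW, hTc⟩, hcl, h⟩
    · push Not at h
      refine Or.inr ⟨⟨?_, hTc⟩, hcl⟩
      intro x hx
      rw [Finset.mem_sdiff, hN, Finset.mem_insert, Finset.mem_filter]
      refine ⟨hTW hx, ?_⟩
      rintro (h1 | h1)
      · exact (h x hx).1 h1
      · exact (h x hx).2 h1.2
  refine hsplit.trans ?_
  have h0 : Nat.choose 0 t = 0 := Nat.choose_eq_zero_of_lt (by omega)
  generalize N.card = s at *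
  by_cases hbs : s ≤ b
  · have := ih (W \ N) hsub a (b - s) hΔ' (by omega) (by omega)
    have hc := gls_convex t 0 (b - s) s
    simp only [zero_add, h0, Nat.sub_add_cancel hbs] at hc
    omega
  · cases a with
    | zero => simp at hn; omega
    | succ a =>
      have he : (a + 1) * (Δ + 1) = a * (Δ + 1) + (Δ + 1) := by ring
      have he' : (a + 1) * (Δ + 1).choose t = a * (Δ + 1).choose t + (Δ + 1).choose t := by ring
      have := ih (W \ N) hsub a (b + (Δ + 1) - s) hΔ' (by omega) (by omega)
      have hc := gls_convex t b (s - b) (Δ + 1 - s)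
      rw [show b + (s - b) = s by omega, show b + (Δ + 1 - s) = b + (Δ + 1) - s by omega,
        show s + (Δ + 1 - s) = Δ + 1 by omega] at hc
      omega

/-- **GLS Conjecture / Theorem.** Any simple graph on `n` vertices with maximum degree at most
`Δ` has at most `a * (Δ+1).choose t + b.choose t` cliques of size `t ≥ 3`, where
`n = a * (Δ+1) + b` with `0 ≤ b ≤ Δ`. -/
theorem stmt_0 {V : Type*} [Fintype V] [DecidableEq V] (G : SimpleGraph V) [DecidableRel G.Adj]
    (Δ : ℕ) (hΔ : ∀ v : V, G.degree v ≤ Δ) (t : ℕ) (ht : 3 ≤ t)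
    (a b : ℕ) (hb : b ≤ Δ) (hn : Fintype.card V = a * (Δ + 1) + b) :
    (G.cliqueFinset t).card ≤ a * (Δ + 1).choose t + b.choose t := by
  classical
  refine le_trans (Finset.card_le_card ?_)
    (gls_main G Δ t ht Finset.univ a b ?_ hb (by rw [Finset.card_univ, hn]))
  · intro T hT
    rw [SimpleGraph.mem_cliqueFinset_iff, SimpleGraph.isNClique_iff] at hT
    simp [hT.1, hT.2]
  · intro v _
    refine le_trans (le_of_eq ?_) (hΔ v)
    rw [← SimpleGraph.card_neighborFinset_eq_degree]
    congr 1
    ext x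
    simp
end

section
/- For any integer $t \ge 3$ and any finite simple graph $G = G(V,E)$, one has $\sum_{v \in V} |T_v| \le \sum_{v \in V} \binom{\deg(v)+1}{t}$, where $T_v$ is the set of all $t$-cliques of $G$ intersecting the closed neighborhood of $v$. -/
/-- The local count on a `(t+1)`-set `S`. -/
theorem local_count {V : Type*} [Fintype V] [DecidableEq V] (G : SimpleGraph V) [DecidableRel G.Adj]
    (S : Finset V) (hS : 4 ≤ S.card) :
    (Finset.univ.filter (fun v => v ∈ S ∧ G.IsClique (S.erase v : Finset V) ∧ ∃ u ∈ S, G.Adj v u)).card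
      ≤ (Finset.univ.filter (fun v => v ∈ S ∧ ∀ u ∈ S, u ≠ v → G.Adj v u)).card := by
  classical
  by_cases hc : ∀ x ∈ S, ∀ y ∈ S, x ≠ y → G.Adj x y
  · apply Finset.card_le_card
    intro v hv
    simp only [Finset.mem_filter, Finset.mem_univ, true_and] at hv ⊢
    exact ⟨hv.1, fun u hu hne => hc v hv.1 u hu hne.symm⟩
  push Not at hc
  obtain ⟨x, hx, y, hy, hxy, hadj⟩ := hc
  set A := Finset.univ.filter
    (fun v => v ∈ S ∧ G.IsClique (S.erase v : Finset V) ∧ ∃ u ∈ S, G.Adj v u) with hA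
  set B := Finset.univ.filter (fun v => v ∈ S ∧ ∀ u ∈ S, u ≠ v → G.Adj v u) with hB
  have key : ∀ v ∈ A, ∀ a ∈ S, ∀ b ∈ S, a ≠ v → b ≠ v → a ≠ b → G.Adj a b := by
    intro v hv a ha b hb hav hbv hab
    simp only [hA, Finset.mem_filter, Finset.mem_univ, true_and] at hv
    exact hv.2.1 (by simp [ha, hav]) (by simp [hb, hbv]) hab
  have hsub : A ⊆ {x, y} := by
    intro v hv
    by_contra h
    simp only [Finset.mem_insert, Finset.mem_singleton, not_or] at h
    exact hadj (key v hv x hx y hy (Ne.symm h.1) (Ne.symm h.2) hxy)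
  by_cases h2 : x ∈ A ∧ y ∈ A
  · have hB2 : (S.erase x).erase y ⊆ B := by
      intro z hz
      simp only [Finset.mem_erase] at hz
      simp only [hB, Finset.mem_filter, Finset.mem_univ, true_and]
      refine ⟨hz.2.2, fun u hu hne => ?_⟩
      by_cases hux : u = x
      · exact key y h2.2 z hz.2.2 u hu hz.1 (by rw [hux]; exact hxy) hne.symm
      · exact key x h2.1 z hz.2.2 u hu hz.2.1 hux hne.symm
    have h3 := Finset.card_le_card hB2
    rw [Finset.card_erase_of_mem (by simp [hy, hxy.symm]), Finset.card_erase_of_mem hx] at h3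
    have h4 := (Finset.card_le_card hsub).trans Finset.card_le_two
    omega
  · have h1 : A.card ≤ 1 := by
      rw [Finset.card_le_one]
      intro a ha b hb
      have h5 := hsub ha
      have h6 := hsub hb
      simp only [Finset.mem_insert, Finset.mem_singleton] at h5 h6
      rcases h5 with rfl | rfl <;> rcases h6 with rfl | rfl <;> tauto
    rcases A.eq_empty_or_nonempty with h0 | ⟨v, hv⟩
    · simp [h0]
    · have hv' := hv
      simp only [hA, Finset.mem_filter, Finset.mem_univ, true_and] at hv'
      obtain ⟨hvS, -, u, hu, huv⟩ := hv'
      refine h1.trans (Finset.card_pos.mpr ⟨u, ?_⟩)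
      simp only [hB, Finset.mem_filter, Finset.mem_univ, true_and]
      refine ⟨hu, fun w hw hwu => ?_⟩
      by_cases hwv : w = v
      · rw [hwv]; exact huv.symm
      · exact key v hv u hu w hw huv.ne' hwv hwu.symm

/-- For a finite simple graph `G` and `t ≥ 3`,
`∑_{v ∈ V} |T_v| ≤ ∑_{v ∈ V} (deg v + 1).choose t`, where `T_v` is the set of `t`-cliques of `G`
intersecting the closed neighborhood of `v`. -/
theorem stmt_1 {V : Type*} [Fintype V] [DecidableEq V] (G : SimpleGraph V) [DecidableRel G.Adj]
    (t : ℕ) (ht : 3 ≤ t) :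
    ∑ v : V, ((G.cliqueFinset t).filter
        (fun s => (s ∩ insert v (G.neighborFinset v)).Nonempty)).card
      ≤ ∑ v : V, (G.degree v + 1).choose t := by
  classical
  obtain ⟨k, rfl⟩ : ∃ k, t = k + 1 := ⟨t - 1, by omega⟩
  let P : V → Finset V → Prop :=
    fun v S => v ∈ S ∧ G.IsClique (S.erase v : Finset V) ∧ ∃ u ∈ S, G.Adj v u
  let Q : V → Finset V → Prop := fun v S => v ∈ S ∧ ∀ u ∈ S, u ≠ v → G.Adj v u
  let U : Finset (Finset V) := Finset.powersetCard (k + 2) Finset.univ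
  have hstep : ∀ v : V, ((G.cliqueFinset (k + 1)).filter
        (fun s => (s ∩ insert v (G.neighborFinset v)).Nonempty)).card
      ≤ (G.degree v).choose k + (U.filter (P v)).card := by
    intro v
    rw [← Finset.card_filter_add_card_filter_not (fun s => v ∈ s)]
    apply add_le_add
    · rw [← G.card_neighborFinset_eq_degree, ← Finset.card_powersetCard]
      apply Finset.card_le_card_of_injOn (fun s => s.erase v)
      · intro s hs
        simp only [Finset.coe_filter, Finset.mem_filter, Set.mem_setOf_eq,
          SimpleGraph.mem_cliqueFinset_iff] at hs
        obtain ⟨⟨hcl, -⟩, hv⟩ := hs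
        simp only [Finset.mem_coe, Finset.mem_powersetCard]
        refine ⟨fun u hu => ?_, ?_⟩
        · rw [Finset.mem_erase] at hu
          rw [SimpleGraph.mem_neighborFinset]
          exact hcl.1 hv hu.2 hu.1.symm
        · rw [Finset.card_erase_of_mem hv, hcl.2]; rfl
      · intro s hs s' hs' h
        simp only [Finset.coe_filter, Finset.mem_filter, Set.mem_setOf_eq] at hs hs'
        have h' : s.erase v = s'.erase v := h
        rw [← Finset.insert_erase hs.2, h', Finset.insert_erase hs'.2]
    · apply Finset.card_le_card_of_injOn (fun s => insert v s)
      · intro s hs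
        simp only [Finset.coe_filter, Finset.mem_filter, Set.mem_setOf_eq,
          SimpleGraph.mem_cliqueFinset_iff] at hs
        obtain ⟨⟨hcl, u, hu⟩, hv⟩ := hs
        simp only [Finset.mem_inter, Finset.mem_insert, SimpleGraph.mem_neighborFinset] at hu
        simp only [Finset.mem_coe, Finset.mem_filter, U, P, Finset.mem_powersetCard]
        refine ⟨⟨Finset.subset_univ _, ?_⟩, Finset.mem_insert_self _ _, ?_, u, ?_, ?_⟩
        · rw [Finset.card_insert_of_notMem hv, hcl.2]
        · rw [Finset.erase_insert hv]; exact hcl.1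
        · exact Finset.mem_insert_of_mem hu.1
        · rcases hu.2 with h | h
          · exact absurd (h ▸ hu.1) hv
          · exact h
      · intro s hs s' hs' h
        simp only [Finset.coe_filter, Finset.mem_filter, Set.mem_setOf_eq] at hs hs'
        have h' : insert v s = insert v s' := h
        rw [← Finset.erase_insert hs.2, h', Finset.erase_insert hs'.2]
  have hQ : ∀ v : V, (U.filter (Q v)).card ≤ (G.degree v).choose (k + 1) := by
    intro v
    rw [← G.card_neighborFinset_eq_degree, ← Finset.card_powersetCard]
    apply Finset.card_le_card_of_injOn (fun s => s.erase v)
    · intro s hs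
      simp only [Finset.coe_filter, Set.mem_setOf_eq, U, Q, Finset.mem_powersetCard] at hs
      obtain ⟨⟨-, hcard⟩, hv, hall⟩ := hs
      simp only [Finset.mem_coe, Finset.mem_powersetCard]
      refine ⟨fun u hu => ?_, ?_⟩
      · rw [Finset.mem_erase] at hu
        rw [SimpleGraph.mem_neighborFinset]
        exact hall u hu.2 hu.1
      · rw [Finset.card_erase_of_mem hv, hcard]; rfl
    · intro s hs s' hs' h
      simp only [Finset.coe_filter, Set.mem_setOf_eq, Q] at hs hs'
      have h' : s.erase v = s'.erase v := h
      rw [← Finset.insert_erase hs.2.1, h', Finset.insert_erase hs'.2.1]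
  have hPQ : ∑ v : V, (U.filter (P v)).card ≤ ∑ v : V, (U.filter (Q v)).card := by
    have e1 := Finset.sum_card_bipartiteAbove_eq_sum_card_bipartiteBelow
      (s := (Finset.univ : Finset V)) (t := U) P
    have e2 := Finset.sum_card_bipartiteAbove_eq_sum_card_bipartiteBelow
      (s := (Finset.univ : Finset V)) (t := U) Q
    simp only [Finset.bipartiteAbove, Finset.bipartiteBelow] at e1 e2
    rw [e1, e2]
    apply Finset.sum_le_sum
    intro S hS
    have hc : 4 ≤ S.card := by
      rw [(Finset.mem_powersetCard.mp hS).2]; omega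
    convert local_count G S hc
  calc _ ≤ ∑ v : V, ((G.degree v).choose k + (U.filter (P v)).card) :=
        Finset.sum_le_sum fun v _ => hstep v
    _ = ∑ v : V, (G.degree v).choose k + ∑ v : V, (U.filter (P v)).card :=
        Finset.sum_add_distrib
    _ ≤ ∑ v : V, (G.degree v).choose k + ∑ v : V, (G.degree v).choose (k + 1) :=
        Nat.add_le_add_left (hPQ.trans (Finset.sum_le_sum fun v _ => hQ v)) _
    _ = _ := by
        rw [← Finset.sum_add_distrib]
        exact Finset.sum_congr rfl fun v _ => (Nat.choose_succ_succ _ _).symm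
end

section
/- For any integer $t \ge 3$ and any finite nonempty simple graph $G = G(V,E)$, there exists a vertex $v \in V$ such that $|T_v| \le \binom{\deg(v)+1}{t}$, where $T_v$ is the set of all $t$-cliques of $G$ intersecting the closed neighborhood of $v$. -/
/-- Double counting pairs (vertex, t-set avoiding it) via their unions. -/
lemma aux_double {V : Type*} [Fintype V] [DecidableEq V] (t : ℕ)
    (P : V → Finset V → Prop) [∀ v K, Decidable (P v K)] :
    ∑ v : V, ((Finset.powersetCard t Finset.univ).filter (fun K => v ∉ K ∧ P v K)).card
      = ∑ S ∈ Finset.powersetCard (t + 1) (Finset.univ : Finset V),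
          (S.filter (fun v => P v (S.erase v))).card := by
  rw [← Finset.card_sigma, ← Finset.card_sigma]
  refine Finset.card_bij' (fun p _ => ⟨insert p.1 p.2, p.1⟩) (fun p _ => ⟨p.2, p.1.erase p.2⟩)
    ?_ ?_ ?_ ?_
  · rintro ⟨v, K⟩ h
    simp only [Finset.mem_sigma, Finset.mem_univ, true_and, Finset.mem_filter,
      Finset.mem_powersetCard, Finset.subset_univ] at h ⊢
    obtain ⟨h1, h2, h3⟩ := h
    refine ⟨?_, Finset.mem_insert_self _ _, ?_⟩
    · rw [Finset.card_insert_of_notMem h2, h1]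
    · rwa [Finset.erase_insert h2]
  · rintro ⟨S, v⟩ h
    simp only [Finset.mem_sigma, Finset.mem_univ, true_and, Finset.mem_filter,
      Finset.mem_powersetCard, Finset.subset_univ] at h ⊢
    obtain ⟨h1, h2, h3⟩ := h
    refine ⟨?_, Finset.notMem_erase _ _, h3⟩
    rw [Finset.card_erase_of_mem h2, h1]; rfl
  · rintro ⟨v, K⟩ h
    simp only [Finset.mem_sigma, Finset.mem_univ, true_and, Finset.mem_filter] at h
    simp [Finset.erase_insert h.2.1]
  · rintro ⟨S, v⟩ h
    simp only [Finset.mem_sigma, Finset.mem_filter] at h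
    simp [Finset.insert_erase h.2.1]

/-- The local inequality on a single `(t+1)`-set. -/
lemma aux_local {V : Type*} [DecidableEq V] (G : SimpleGraph V) (S : Finset V)
    (hS : 4 ≤ S.card) (A B : Finset V)
    (hA : ∀ v, v ∈ A ↔ v ∈ S ∧ (∀ a ∈ S, ∀ b ∈ S, a ≠ v → b ≠ v → a ≠ b → G.Adj a b) ∧
      ∃ u ∈ S, u ≠ v ∧ G.Adj v u)
    (hB : ∀ v, v ∈ B ↔ v ∈ S ∧ ∀ u ∈ S, u ≠ v → G.Adj v u) : A.card ≤ B.card := by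
  by_cases hAB : A ⊆ B
  · exact Finset.card_le_card hAB
  obtain ⟨x, hxA, hxB⟩ := Finset.not_subset.1 hAB
  obtain ⟨hxS, hcl, u, huS, hux, hxu⟩ := (hA x).1 hxA
  have : ∃ y ∈ S, y ≠ x ∧ ¬ G.Adj x y := by
    by_contra! h
    exact hxB ((hB x).2 ⟨hxS, h⟩)
  obtain ⟨y, hyS, hyx, hxy⟩ := this
  have hsub : A ⊆ {x, y} := by
    intro v hv
    obtain ⟨_, hc, _⟩ := (hA v).1 hv
    by_contra hne
    simp only [Finset.mem_insert, Finset.mem_singleton, not_or] at hne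
    exact hxy (hc x hxS y hyS (Ne.symm hne.1) (Ne.symm hne.2) hyx.symm)
  by_cases hy : y ∈ A
  · obtain ⟨_, hcy, _⟩ := (hA y).1 hy
    have h1 : S \ {x, y} ⊆ B := by
      intro w hw
      simp only [Finset.mem_sdiff, Finset.mem_insert, Finset.mem_singleton, not_or] at hw
      obtain ⟨hwS, hwx, hwy⟩ := hw
      refine (hB w).2 ⟨hwS, fun z hz hzw => ?_⟩
      by_cases hzx : z = x
      · exact hcy w hwS z hz hwy (by rw [hzx]; exact hyx.symm) hzw.symm
      · exact hcl w hwS z hz hwx hzx hzw.symm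
    have h2 := Finset.card_le_card h1
    have h3 := Finset.le_card_sdiff {x, y} S
    have h4 := Finset.card_le_card hsub
    have h5 : ({x, y} : Finset V).card ≤ 2 := Finset.card_le_two
    omega
  · have h1 : A ⊆ {x} := by
      intro v hv
      have := hsub hv
      simp only [Finset.mem_insert, Finset.mem_singleton] at this ⊢
      rcases this with h | h
      · exact h
      · exact absurd (h ▸ hv) hy
    have h2 := Finset.card_le_card h1
    have h3 : u ∈ B := by
      refine (hB u).2 ⟨huS, fun z hz hzu => ?_⟩
      by_cases hzx : z = x
      · rw [hzx]; exact hxu.symm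
      · exact hcl u huS z hz hux hzx hzu.symm
    have h4 := Finset.card_pos.2 ⟨u, h3⟩
    simp only [Finset.card_singleton] at h2
    omega

/-- For a finite nonempty simple graph `G` and `t ≥ 3`, there is a vertex `v` with
`|T_v| ≤ (deg v + 1).choose t`, where `T_v` is the set of `t`-cliques of `G` intersecting the
closed neighborhood of `v`. -/
theorem stmt_2 {V : Type*} [Fintype V] [DecidableEq V] [Nonempty V]
    (G : SimpleGraph V) [DecidableRel G.Adj] (t : ℕ) (ht : 3 ≤ t) :
    ∃ v : V, ((G.cliqueFinset t).filter
        (fun s => (s ∩ insert v (G.neighborFinset v)).Nonempty)).card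
      ≤ (G.degree v + 1).choose t := by
  classical
  suffices h : ∑ v : V, ((G.cliqueFinset t).filter
        (fun s => (s ∩ insert v (G.neighborFinset v)).Nonempty)).card
      ≤ ∑ v : V, (G.degree v + 1).choose t by
    obtain ⟨v, _, hv⟩ := Finset.exists_le_of_sum_le Finset.univ_nonempty h
    exact ⟨v, hv⟩
  obtain ⟨k, rfl⟩ : ∃ k, t = k + 1 := ⟨t - 1, by omega⟩
  let P : V → Finset V → Prop := fun v K => G.IsClique (K : Set V) ∧ ∃ u ∈ K, G.Adj v u
  let Q : V → Finset V → Prop := fun v K => ∀ u ∈ K, G.Adj v u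
  have hv : ∀ v : V, ((G.cliqueFinset (k+1)).filter
        (fun s => (s ∩ insert v (G.neighborFinset v)).Nonempty)).card ≤
      (G.degree v).choose k +
      ((Finset.powersetCard (k+1) Finset.univ).filter (fun K => v ∉ K ∧ P v K)).card := by
    intro v
    have e : (G.degree v).choose k =
        ((Finset.powersetCard k (G.neighborFinset v)).image (insert v)).card := by
      rw [Finset.card_image_of_injOn, Finset.card_powersetCard, G.card_neighborFinset_eq_degree]
      intro a ha b hb hab
      simp only [Finset.mem_coe,
        Finset.mem_powersetCard] at ha hb
      have hva : v ∉ a := fun h => by simpa using ha.1 h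
      have hvb : v ∉ b := fun h => by simpa using hb.1 h
      rw [← Finset.erase_insert hva, ← Finset.erase_insert hvb]
      exact congrArg (fun s => Finset.erase s v) hab
    rw [e]
    refine le_trans (Finset.card_le_card ?_) (Finset.card_union_le _ _)
    intro s hs
    simp only [Finset.mem_filter, SimpleGraph.mem_cliqueFinset_iff,
      SimpleGraph.isNClique_iff] at hs
    obtain ⟨⟨hc, hk⟩, w, hw⟩ := hs
    rw [Finset.mem_union]
    by_cases hvs : v ∈ s
    · left
      refine Finset.mem_image.2 ⟨s.erase v, ?_, Finset.insert_erase hvs⟩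
      rw [Finset.mem_powersetCard]
      refine ⟨fun u hu => ?_, by rw [Finset.card_erase_of_mem hvs, hk]; rfl⟩
      rw [Finset.mem_erase] at hu
      rw [SimpleGraph.mem_neighborFinset]
      exact hc hvs hu.2 hu.1.symm
    · right
      simp only [Finset.mem_inter, Finset.mem_insert, SimpleGraph.mem_neighborFinset] at hw
      simp only [Finset.mem_filter, Finset.mem_powersetCard, Finset.subset_univ, true_and]
      refine ⟨hk, hvs, hc, w, hw.1, ?_⟩
      rcases hw.2 with h | h
      · exact absurd (h ▸ hw.1) hvs
      · exact h
  have hd : ∀ v : V, (G.degree v).choose (k+1) =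
      ((Finset.powersetCard (k+1) Finset.univ).filter (fun K => v ∉ K ∧ Q v K)).card := by
    intro v
    rw [← G.card_neighborFinset_eq_degree, ← Finset.card_powersetCard]
    congr 1
    ext K
    simp only [Finset.mem_filter, Finset.mem_powersetCard, Finset.subset_univ, true_and]
    constructor
    · rintro ⟨h1, h2⟩
      exact ⟨h2, fun h => by simpa using h1 h, fun u hu => by simpa using h1 hu⟩
    · rintro ⟨h1, h2, h3⟩
      exact ⟨fun u hu => by simpa using h3 u hu, h1⟩
  refine (Finset.sum_le_sum fun v _ => hv v).trans ?_
  simp only [Nat.choose_succ_succ', Finset.sum_add_distrib]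
  refine Nat.add_le_add_left ?_ _
  simp only [hd]
  rw [aux_double, aux_double]
  refine Finset.sum_le_sum fun S hS => ?_
  rw [Finset.mem_powersetCard] at hS
  refine aux_local G S (by omega) _ _ ?_ ?_
  · intro v
    simp only [Finset.mem_filter, P, SimpleGraph.IsClique, Set.Pairwise, Finset.mem_coe,
      Finset.mem_erase]
    constructor
    · rintro ⟨h1, h2, u, ⟨h3, h4⟩, h5⟩
      exact ⟨h1, fun a ha b hb hav hbv hab => h2 ⟨hav, ha⟩ ⟨hbv, hb⟩ hab, u, h4, h3, h5⟩
    · rintro ⟨h1, h2, u, h4, h3, h5⟩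
      exact ⟨h1, fun a ha b hb hab => h2 a ha.2 b hb.2 ha.1 hb.1 hab, u, ⟨h3, h4⟩, h5⟩
  · intro v
    simp only [Finset.mem_filter, Q, Finset.mem_erase]
    exact and_congr_right fun _ => ⟨fun h u hu hn => h u ⟨hn, hu⟩, fun h u hu => h u hu.2 hu.1⟩
end

section
/- Let $G = G(V,E)$ be a finite simple graph and $t \ge 3$ an integer. Define $\Phi_{\mathrm{good}}$ to be the set of tuples $(u, x_1, \dotsc, x_t) \in V^{t+1}$ with $u, x_1, \dotsc, x_t$ pairwise distinct, such that $x_1, \dotsc, x_t$ form a $t$-clique in $G$ and $u \sim x_i$ for some $i \in [t]$. Define $\Omega_{\mathrm{good}}$ to be the set of tuples $(w, y_1, \dotsc, y_t) \in V^{t+1}$ with $w, y_1, \dotsc, y_t$ pairwise distinct, such that $w \sim y_i$ for all $i \in [t]$ and some $t-1$ of the vertices $y_1, \dotsc, y_t$ form a $(t-1)$-clique in $G$. Then $|\Phi_{\mathrm{good}}| \le |\Omega_{\mathrm{good}}|$. -/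
open Classical in
/-- The vertices `u` of `S` whose removal leaves a clique and which have a neighbour in `S`. -/
noncomputable def uSet {V : Type*} (G : SimpleGraph V) (S : Finset V) : Finset V :=
  S.filter (fun u => G.IsClique (S.erase u : Finset V) ∧ ∃ v ∈ S, G.Adj u v)

open Classical in
/-- The vertices `w` of `S` adjacent to all others, with a `(t-1)`-clique in the rest. -/
noncomputable def wSet {V : Type*} (G : SimpleGraph V) (t : ℕ) (S : Finset V) : Finset V :=
  S.filter (fun w => (∀ v ∈ S, v ≠ w → G.Adj w v) ∧ ∃ s ⊆ S.erase w, G.IsNClique (t - 1) s)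

open Classical in
lemma mem_wSet_of_adj {V : Type*} (G : SimpleGraph V) (t : ℕ) (S : Finset V)
    (hS : S.card = t + 1) (u w : V) (hu : u ∈ S) (hw : w ∈ S)
    (hc : G.IsClique (S.erase u : Finset V)) (h : G.Adj u w) : w ∈ wSet G t S := by
  have hne := h.ne
  refine Finset.mem_filter.2 ⟨hw, ?_, (S.erase u).erase w, ?_, ?_, ?_⟩
  · intro v hv hvw
    by_cases hvu : v = u
    · subst hvu; exact h.symm
    · exact hc (by simp [hw, hne.symm]) (by simp [hv, hvu]) hvw.symm
  · intro z hz
    simp at hz ⊢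
    tauto
  · exact hc.subset (by
      intro z hz
      simp at hz ⊢
      tauto)
  · rw [Finset.card_erase_of_mem (by simp [hw, hne.symm]), Finset.card_erase_of_mem hu, hS]
    omega

open Classical in
lemma uSet_card_le {V : Type*} (G : SimpleGraph V) (t : ℕ) (ht : 3 ≤ t) (S : Finset V)
    (hS : S.card = t + 1) : (uSet G S).card ≤ (wSet G t S).card := by
  by_cases h1 : (uSet G S).card ≤ 1
  · rcases Finset.eq_empty_or_nonempty (uSet G S) with h0 | ⟨u, hu⟩
    · simp [h0]
    · obtain ⟨huS, hc, v, hv, huv⟩ := Finset.mem_filter.1 hu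
      have := Finset.card_pos.2 ⟨v, mem_wSet_of_adj G t S hS u v huS hv hc huv⟩
      omega
  · obtain ⟨a, ha, b, hb, hab⟩ := Finset.one_lt_card.1 (not_le.1 h1)
    obtain ⟨haS, hac, -⟩ := Finset.mem_filter.1 ha
    obtain ⟨hbS, hbc, -⟩ := Finset.mem_filter.1 hb
    have key : ∀ w ∈ S, w ≠ a → w ≠ b → w ∈ wSet G t S := fun w hw hwa hwb =>
      mem_wSet_of_adj G t S hS a w haS hw hac
        (hbc (by simp [haS, hab]) (by simp [hw, hwb]) hwa.symm)
    by_cases hadj : G.Adj a b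
    · apply Finset.card_le_card
      intro w hw
      have hwS := (Finset.mem_filter.1 hw).1
      by_cases hwa : w = a
      · subst hwa
        exact mem_wSet_of_adj G t S hS b w hbS haS hbc hadj.symm
      by_cases hwb : w = b
      · subst hwb
        exact mem_wSet_of_adj G t S hS a w haS hbS hac hadj
      exact key w hwS hwa hwb
    · have hU : uSet G S ⊆ {a, b} := by
        intro c hc
        obtain ⟨hcS, hcc, -⟩ := Finset.mem_filter.1 hc
        by_contra hn
        simp only [Finset.mem_insert, Finset.mem_singleton, not_or] at hn
        exact hadj (hcc (by simp [haS, Ne.symm hn.1]) (by simp [hbS, Ne.symm hn.2]) hab)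
      have hW : (S.erase a).erase b ⊆ wSet G t S := by
        intro w hw
        simp only [Finset.mem_erase] at hw
        exact key w hw.2.2 hw.2.1 hw.1
      have c1 := Finset.card_le_card hU
      have c2 := Finset.card_le_card hW
      rw [Finset.card_erase_of_mem (by simp [hbS, hab.symm]), Finset.card_erase_of_mem haS,
        hS] at c2
      have c3 := Finset.card_le_two (a := a) (b := b)
      omega

lemma mem_uSet_iff {V : Type*} [DecidableEq V] (G : SimpleGraph V) (S : Finset V) (u : V) :
    u ∈ uSet G S ↔ u ∈ S ∧ G.IsClique (S.erase u : Finset V) ∧ ∃ v ∈ S, G.Adj u v := by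
  unfold uSet
  refine (@Finset.mem_filter _ _ (_) _ _).trans ?_
  simp only [Finset.coe_erase]

lemma mem_wSet_iff {V : Type*} [DecidableEq V] (G : SimpleGraph V) (t : ℕ) (S : Finset V)
    (w : V) : w ∈ wSet G t S ↔
      w ∈ S ∧ (∀ v ∈ S, v ≠ w → G.Adj w v) ∧ ∃ s ⊆ S.erase w, G.IsNClique (t - 1) s := by
  unfold wSet
  refine (@Finset.mem_filter _ _ (_) _ _).trans ?_
  simp only [Finset.subset_iff, Finset.mem_erase]

lemma exists_inj {V : Type*} (A B : Finset V) (h : A.card ≤ B.card) :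
    ∃ f : V → V, (∀ a ∈ A, f a ∈ B) ∧ Set.InjOn f A := by
  classical
  obtain ⟨e⟩ : Nonempty (A ↪ B) := Function.Embedding.nonempty_of_card_le (by simpa using h)
  refine ⟨fun a => if ha : a ∈ A then (e ⟨a, ha⟩ : V) else a, ?_, ?_⟩
  · intro a ha
    simp [ha]
  · intro a ha b hb hab
    have ha' : a ∈ A := ha
    have hb' : b ∈ A := hb
    simp only [ha', hb', dif_pos] at hab
    simpa using e.injective (Subtype.ext hab)

lemma exists_choice {V : Type*} (G : SimpleGraph V) (t : ℕ) (ht : 3 ≤ t) :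
    ∃ f : Finset V → V → V, ∀ S : Finset V, S.card = t + 1 →
      (∀ a ∈ uSet G S, f S a ∈ wSet G t S) ∧ Set.InjOn (f S) (uSet G S) := by
  classical
  have : ∀ S : Finset V, ∃ f : V → V, S.card = t + 1 →
      (∀ a ∈ uSet G S, f a ∈ wSet G t S) ∧ Set.InjOn f (uSet G S) := by
    intro S
    by_cases hS : S.card = t + 1
    · obtain ⟨f, hf⟩ := exists_inj _ _ (uSet_card_le G t ht S hS)
      exact ⟨f, fun _ => hf⟩
    · exact ⟨id, fun h => absurd h hS⟩
  choose f hf using this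
  exact ⟨f, hf⟩

/-- `|Φ_good| ≤ |Ω_good|`: the number of tuples `(u, x_1, …, x_t)` of pairwise distinct
vertices such that `x_1, …, x_t` form a `t`-clique and `u` is adjacent to some `x_i` is at
most the number of tuples `(w, y_1, …, y_t)` of pairwise distinct vertices such that `w` is
adjacent to every `y_i` and some `t-1` of the `y_i` form a `(t-1)`-clique. -/
theorem stmt_7 {V : Type*} [Fintype V] [DecidableEq V] (G : SimpleGraph V) [DecidableRel G.Adj]
    (t : ℕ) (ht : 3 ≤ t) :
    (Finset.univ.filter (fun p : V × (Fin t → V) =>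
        Function.Injective (Fin.cons p.1 p.2 : Fin (t + 1) → V) ∧
        G.IsNClique t (Finset.univ.image p.2) ∧ ∃ i : Fin t, G.Adj p.1 (p.2 i))).card
      ≤ (Finset.univ.filter (fun p : V × (Fin t → V) =>
        Function.Injective (Fin.cons p.1 p.2 : Fin (t + 1) → V) ∧
        (∀ i : Fin t, G.Adj p.1 (p.2 i)) ∧
        ∃ s ⊆ Finset.univ.image p.2, G.IsNClique (t - 1) s)).card := by
  obtain ⟨f, hf⟩ := exists_choice G t ht
  let S : V × (Fin t → V) → Finset V := fun p => insert p.1 (Finset.univ.image p.2)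
  have hcons : ∀ p : V × (Fin t → V),
      Function.Injective (Fin.cons p.1 p.2 : Fin (t + 1) → V) ↔
        p.1 ∉ Finset.univ.image p.2 ∧ Function.Injective p.2 := by
    intro p
    rw [Fin.cons_injective_iff]
    simp
  have hcard : ∀ p : V × (Fin t → V),
      Function.Injective (Fin.cons p.1 p.2 : Fin (t + 1) → V) → (S p).card = t + 1 := by
    intro p hp
    obtain ⟨h1, h2⟩ := (hcons p).1 hp
    simp only [S]
    rw [Finset.card_insert_of_notMem h1, Finset.card_image_of_injective _ h2]
    simp
  have herase : ∀ p : V × (Fin t → V),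
      Function.Injective (Fin.cons p.1 p.2 : Fin (t + 1) → V) →
        (S p).erase p.1 = Finset.univ.image p.2 := by
    intro p hp
    exact Finset.erase_insert ((hcons p).1 hp).1
  let F : V × (Fin t → V) → V × (Fin t → V) := fun p =>
    (f (S p) p.1, fun i => Equiv.swap p.1 (f (S p) p.1) (p.2 i))
  have hU : ∀ p : V × (Fin t → V),
      (Function.Injective (Fin.cons p.1 p.2 : Fin (t + 1) → V) ∧
        G.IsNClique t (Finset.univ.image p.2) ∧ ∃ i : Fin t, G.Adj p.1 (p.2 i)) →
      p.1 ∈ uSet G (S p) := by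
    rintro p ⟨hp, hc, i, hi⟩
    refine (mem_uSet_iff G _ _).2 ⟨by simp [S], ?_, p.2 i, by simp [S], hi⟩
    refine hc.isClique.subset ?_
    intro z hz
    rw [Finset.mem_coe, Finset.mem_erase] at hz
    exact Finset.mem_coe.2 ((Finset.mem_insert.1 hz.2).resolve_left hz.1)
  have hFS : ∀ p : V × (Fin t → V), f (S p) p.1 ∈ S p → S (F p) = S p := by
    intro p hw
    have e1 : S (F p) = (S p).image (Equiv.swap p.1 (f (S p) p.1)) := by
      ext z
      simp [S, F]
    rw [e1]
    apply Finset.eq_of_subset_of_card_le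
    · intro z hz
      obtain ⟨y, hy, rfl⟩ := Finset.mem_image.1 hz
      rw [Equiv.swap_apply_def]
      split_ifs
      · exact hw
      · simp [S]
      · exact hy
    · rw [Finset.card_image_of_injective _ (Equiv.injective _)]
  have hFinj : ∀ p : V × (Fin t → V),
      Function.Injective (Fin.cons p.1 p.2 : Fin (t + 1) → V) →
      Function.Injective (Fin.cons (F p).1 (F p).2 : Fin (t + 1) → V) := by
    intro p hp
    have : (Fin.cons (F p).1 (F p).2 : Fin (t + 1) → V) =
        Equiv.swap p.1 (f (S p) p.1) ∘ (Fin.cons p.1 p.2 : Fin (t + 1) → V) := by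
      funext i
      refine Fin.cases ?_ (fun j => ?_) i <;> simp [F]
    rw [this]
    exact (Equiv.injective _).comp hp
  apply Finset.card_le_card_of_injOn F
  · intro p hp
    have hp' := (Finset.mem_filter.1 (Finset.mem_coe.1 hp)).2
    have hw := (hf (S p) (hcard p hp'.1)).1 _ (hU p hp')
    obtain ⟨hwS, hall, s, hs, hsc⟩ := (mem_wSet_iff G t _ _).1 hw
    have hI := hFinj p hp'.1
    have hS := hFS p hwS
    have he := herase (F p) hI
    refine Finset.mem_coe.2 (Finset.mem_filter.2 ⟨Finset.mem_univ _, hI, ?_, s, ?_, hsc⟩)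
    · intro i
      apply hall
      · rw [← hS]; simp [S]
      · intro h
        apply ((hcons _).1 hI).1
        rw [show (F p).1 = (F p).2 i from h.symm]
        simp
    · rw [← he, hS]
      intro z hz
      have := hs hz
      simp only [Finset.mem_erase] at this ⊢
      exact this
  · intro p hp q hq hpq
    have hp' := (Finset.mem_filter.1 (Finset.mem_coe.1 hp)).2
    have hq' := (Finset.mem_filter.1 (Finset.mem_coe.1 hq)).2
    have hfp := hf (S p) (hcard p hp'.1)
    have hfq := hf (S q) (hcard q hq'.1)
    have hSp := hFS p ((mem_wSet_iff G t _ _).1 (hfp.1 _ (hU p hp'))).1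
    have hSq := hFS q ((mem_wSet_iff G t _ _).1 (hfq.1 _ (hU q hq'))).1
    have hS : S p = S q := by rw [← hSp, ← hSq, hpq]
    have h1 : f (S p) p.1 = f (S q) q.1 := congrArg Prod.fst hpq
    have h2 : p.1 = q.1 := by
      apply hfp.2 (hU p hp') (by rw [hS]; exact hU q hq')
      rw [h1, hS]
    refine Prod.ext h2 (funext fun i => ?_)
    have h3 : (F p).2 i = (F q).2 i := by rw [hpq]
    simp only [F] at h3
    rw [h1, h2] at h3
    exact Equiv.injective _ h3
end

section
/- Let $t \ge 3$ be an integer and let $H$ be a simple graph on $t+1$ vertices that is connected and contains a $t$-clique with vertex set $\{z_1, \dotsc, z_t\}$; let $z^*$ be the remaining vertex, and suppose $z^*$ is adjacent to exactly $k$ of the vertices $z_1, \dotsc, z_t$ with $1 \le k \le t-2$. Then the number of tuples $(u, x_1, \dotsc, x_t)$ of pairwise distinct vertices of $H$ such that $x_1, \dotsc, x_t$ form a $t$-clique in $H$ and $u$ is adjacent to some $x_i$ equals $t!$, while the number of tuples $(w, y_1, \dotsc, y_t)$ of pairwise distinct vertices of $H$ such that $w$ is adjacent to all $y_i$ and some $t-1$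 of the $y_i$ form a $(t-1)$-clique in $H$ equals $k \cdot t!$. -/
theorem aux_count {W : Type*} [Fintype W] [DecidableEq W] (t : ℕ)
    (hW : Fintype.card W = t + 1) (A : Finset W) :
    (Finset.univ.filter (fun p : W × (Fin t → W) =>
        Function.Injective (Fin.cons p.1 p.2 : Fin (t + 1) → W) ∧ p.1 ∈ A)).card
      = A.card * t.factorial := by
  classical
  have hfib : ∀ a : W, (Finset.univ.filter (fun f : Fin t → W =>
      Function.Injective (Fin.cons a f : Fin (t + 1) → W))).card = t.factorial := by
    intro a
    have hc : Fintype.card (Fin t ↪ {x : W // x ≠ a}) = t.factorial := by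
      rw [Fintype.card_embedding_eq, Fintype.card_fin, Fintype.card_subtype_compl]
      simp [hW, Nat.descFactorial_self]
    rw [← hc, ← Finset.card_univ]
    symm
    refine Finset.card_bij (fun e _ => fun i => (e i : W)) ?_ ?_ ?_
    · intro e _
      simp only [Finset.mem_filter, Finset.mem_univ, true_and]
      rw [Fin.cons_injective_iff]
      refine ⟨?_, ?_⟩
      · rintro ⟨i, hi⟩
        exact (e i).2 hi
      · intro i j hij
        exact e.injective (Subtype.ext hij)
    · intro e _ e' _ h
      ext i
      exact congrFun h i
    · intro f hf
      simp only [Finset.mem_filter, Finset.mem_univ, true_and] at hf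
      rw [Fin.cons_injective_iff] at hf
      refine ⟨⟨fun i => ⟨f i, fun h => hf.1 ⟨i, h⟩⟩, ?_⟩, Finset.mem_univ _, rfl⟩
      intro i j hij
      exact hf.2 (congrArg Subtype.val hij)
  have : (Finset.univ.filter (fun p : W × (Fin t → W) =>
        Function.Injective (Fin.cons p.1 p.2 : Fin (t + 1) → W) ∧ p.1 ∈ A)) =
      A.biUnion (fun a => (Finset.univ.filter (fun f : Fin t → W =>
      Function.Injective (Fin.cons a f : Fin (t + 1) → W))).map ⟨fun f => (a, f), fun f g h => (Prod.mk.inj h).2⟩) := by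
    ext ⟨a, f⟩
    simp only [Finset.mem_filter, Finset.mem_univ, true_and, Finset.mem_biUnion, Finset.mem_map]
    constructor
    · rintro ⟨h, ha⟩
      exact ⟨a, ha, f, h, rfl⟩
    · rintro ⟨b, hb, g, hg, h⟩
      obtain ⟨rfl, rfl⟩ := Prod.mk.inj h
      exact ⟨hg, hb⟩
  rw [this, Finset.card_biUnion]
  · simp [hfib]
  · intro a _ b _ hab
    rw [Function.onFun, Finset.disjoint_left]
    simp only [Finset.mem_map]
    rintro _ ⟨f, _, rfl⟩ ⟨g, _, h⟩
    exact hab (Prod.mk.inj h).1.symm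

theorem aux_cons {W : Type*} [Fintype W] (t : ℕ)
    (hW : Fintype.card W = t + 1) (a : W) (f : Fin t → W)
    (h : Function.Injective (Fin.cons a f : Fin (t + 1) → W)) (x : W) :
    (∃ i, f i = x) ↔ x ≠ a := by
  have hb : Function.Bijective (Fin.cons a f : Fin (t + 1) → W) :=
    (Fintype.bijective_iff_injective_and_card _).2 ⟨h, by simp [hW]⟩
  rw [Fin.cons_injective_iff] at h
  constructor
  · rintro ⟨i, rfl⟩ hi
    exact h.1 ⟨i, hi⟩
  · intro hx
    obtain ⟨i, hi⟩ := hb.2 x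
    induction i using Fin.cases with
    | zero => exact absurd hi.symm hx
    | succ i => exact ⟨i, by simpa using hi⟩

/-- Case `1 ≤ k ≤ t-2`: if `H` is a connected graph on `t+1` vertices containing a `t`-clique
`{z_1, …, z_t}` whose remaining vertex `z*` is adjacent to exactly `k` of the `z_i` with
`1 ≤ k ≤ t-2`, then `H` contributes `t!` good `Φ`-tuples and `k * t!` good `Ω`-tuples. -/
theorem stmt_8 {W : Type*} [Fintype W] [DecidableEq W] (H : SimpleGraph W) [DecidableRel H.Adj]
    (t : ℕ) (ht : 3 ≤ t) (hW : Fintype.card W = t + 1) (hconn : H.Connected)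
    (z : Fin t → W) (hz : H.IsNClique t (Finset.univ.image z))
    (zs : W) (hzs : zs ∉ Finset.univ.image z)
    (k : ℕ) (hk1 : 1 ≤ k) (hk2 : k ≤ t - 2)
    (hdeg : (Finset.univ.filter (fun i : Fin t => H.Adj zs (z i))).card = k) :
    (Finset.univ.filter (fun p : W × (Fin t → W) =>
        Function.Injective (Fin.cons p.1 p.2 : Fin (t + 1) → W) ∧
        H.IsNClique t (Finset.univ.image p.2) ∧ ∃ i : Fin t, H.Adj p.1 (p.2 i))).card
      = t.factorial
    ∧ (Finset.univ.filter (fun p : W × (Fin t → W) =>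
        Function.Injective (Fin.cons p.1 p.2 : Fin (t + 1) → W) ∧
        (∀ i : Fin t, H.Adj p.1 (p.2 i)) ∧
        ∃ s ⊆ Finset.univ.image p.2, H.IsNClique (t - 1) s)).card
      = k * t.factorial := by
  classical
  have hzi : Function.Injective z := by
    have := hz.card_eq
    have h2 : (Finset.univ.image z).card = (Finset.univ : Finset (Fin t)).card := by simpa using this
    exact fun i j h => Finset.card_image_iff.1 h2 (by simp) (by simp) h
  have hzc : Function.Injective (Fin.cons zs z : Fin (t + 1) → W) := by
    rw [Fin.cons_injective_iff]
    refine ⟨?_, hzi⟩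
    rintro ⟨i, hi⟩
    exact hzs (Finset.mem_image.2 ⟨i, Finset.mem_univ _, hi⟩)
  have hzx := aux_cons t hW zs z hzc
  have hzadj : ∀ i j, i ≠ j → H.Adj (z i) (z j) := fun i j hij =>
    hz.isClique (by simp) (by simp) (fun h => hij (hzi h))
  have himg : ∀ (a : W) (f : Fin t → W),
      Function.Injective (Fin.cons a f : Fin (t + 1) → W) →
      Finset.univ.image f = Finset.univ.erase a := by
    intro a f h
    ext x
    simp [aux_cons t hW a f h x]
  -- a set of neighbours of the special vertex missing at most one index is impossible
  have hmiss : ∀ j, ¬ ∀ i, i ≠ j → H.Adj zs (z i) := by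
    intro j h
    have hsub : Finset.univ.erase j ⊆ Finset.univ.filter (fun i : Fin t => H.Adj zs (z i)) := by
      intro i hi
      simpa using h i (Finset.ne_of_mem_erase hi)
    have := Finset.card_le_card hsub
    rw [hdeg, Finset.card_erase_of_mem (Finset.mem_univ _), Finset.card_univ, Fintype.card_fin] at this
    omega
  obtain ⟨i0, hi0⟩ : ∃ i, H.Adj zs (z i) := by
    have : 0 < (Finset.univ.filter (fun i : Fin t => H.Adj zs (z i))).card := by omega
    obtain ⟨i, hi⟩ := Finset.card_pos.1 this
    exact ⟨i, by simpa using hi⟩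
  constructor
  · have h1 := aux_count t hW {zs}
    rw [Finset.card_singleton, one_mul] at h1
    rw [← h1]
    congr 1
    apply Finset.filter_congr
    rintro ⟨a, f⟩ _
    refine and_congr_right fun hinj => ?_
    dsimp only at hinj ⊢
    rw [Finset.mem_singleton, himg a f hinj]
    constructor
    · rintro ⟨hcl, -⟩
      by_contra ha
      obtain ⟨j, rfl⟩ := (hzx a).2 ha
      refine hmiss j fun i hij => hcl.isClique ?_ ?_ ?_
      · simpa using fun h => ha h.symm
      · simpa using fun h => hij (hzi h)
      · exact ((hzx (z i)).1 ⟨i, rfl⟩).symm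
    · rintro rfl
      refine ⟨by rw [← himg a z hzc]; exact hz, ?_⟩
      obtain ⟨i, hi⟩ := (aux_cons t hW a f hinj (z i0)).2 ((hzx _).1 ⟨i0, rfl⟩)
      exact ⟨i, hi ▸ hi0⟩
  · have h1 := aux_count t hW ((Finset.univ.filter (fun i : Fin t => H.Adj zs (z i))).image z)
    rw [Finset.card_image_of_injective _ hzi, hdeg] at h1
    rw [← h1]
    congr 1
    apply Finset.filter_congr
    rintro ⟨a, f⟩ _
    refine and_congr_right fun hinj => ?_
    dsimp only at hinj ⊢
    have hfx := aux_cons t hW a f hinj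
    rw [himg a f hinj]
    simp only [Finset.mem_image, Finset.mem_filter, Finset.mem_univ, true_and]
    constructor
    · rintro ⟨hall, -⟩
      have hall' : ∀ x, x ≠ a → H.Adj a x := by
        intro x hx
        obtain ⟨i, rfl⟩ := (hfx x).2 hx
        exact hall i
      by_cases ha : a = zs
      · subst ha
        exact absurd (fun i _ => hall' _ ((hzx (z i)).1 ⟨i, rfl⟩)) (hmiss i0)
      · obtain ⟨j, rfl⟩ := (hzx a).2 ha
        exact ⟨j, (hall' zs (fun h => ha h.symm)).symm, rfl⟩
    · rintro ⟨j, hj, rfl⟩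
      refine ⟨?_, (Finset.univ.image z).erase (z j), ?_, ?_⟩
      · intro i
        have hne := (hfx (f i)).1 ⟨i, rfl⟩
        by_cases hs : f i = zs
        · rw [hs]; exact hj.symm
        · obtain ⟨l, hl⟩ := (hzx _).2 hs
          rw [← hl] at hne ⊢
          exact hzadj _ _ (fun h => hne (by rw [h]))
      · exact Finset.erase_subset_erase _ (Finset.subset_univ _)
      · refine ⟨hz.isClique.subset (by simp), ?_⟩
        rw [Finset.card_erase_of_mem (by simp), hz.card_eq]
end
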